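/- Let k ≥ 2 be an integer and let S be a k-automatic subset of ℕ. Then S is non-sparse if and only if there exists a real number α > 0 such that π_S(x) = Ω(x^α). -/

import Mathlib

/-- `n` can be written as a sum of at least one and at most `N` elements of `S`
(repetitions allowed). -/
def SumOfAtMost (S : Set ℕ) (N n : ℕ) : Prop :=
  ∃ l : List ℕ, l ≠ [] ∧ l.length ≤ N ∧ (∀ x ∈ l, x ∈ S) ∧ l.sum = n

/-- `π_S(x) = #{n ≤ x : n ∈ S}`. -/
noncomputable def piCount (S : Set ℕ) (x : ℕ) : ℕ :=
  Set.ncard {n | n ∈ S ∧ n ≤ x}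

/-- `S` is sparse if `π_S(x) = O((log x)^d)` for some natural number `d`. -/
def IsSparse (S : Set ℕ) : Prop :=
  ∃ d : ℕ, ∃ C : ℝ, 0 < C ∧ ∃ x0 : ℕ, ∀ x : ℕ, x0 ≤ x →
    (piCount S x : ℝ) ≤ C * (Real.log x) ^ d

/-- `S ⊆ ℕ` is `k`-automatic: some DFA over the alphabet `{0, …, k-1}` accepts exactly
the base-`k` expansions (least-significant digit first, without leading zeros)
of the elements of `S`. -/
def IsKAutomatic (k : ℕ) (S : Set ℕ) : Prop :=
  ∃ (m : ℕ) (M : DFA (Fin k) (Fin m)),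
    ∀ w : List (Fin k), w ∈ M.accepts ↔ ∃ s ∈ S, w.map Fin.val = Nat.digits k s

/-!
Fix an automaton accepting the expansions of `S`, and call a state useful if it occurs on some
accepting run.

If no useful state carries two distinct loops of the same length, an accepted word is determined by
recording, for every state, the time of its last visit and the letter read then. Indeed, if two
accepted words with the same record diverge at a state `q`, then from there until the common last
visit to `q` they follow loops of equal length, hence the same loop, and the next letter is also
the same, a contradiction. So only polynomially many words of length at most `N` are accepted.

If instead a useful state carries loops `w₁ ≠ w₂` of the same length, then concatenating `n` copies
of them in any order yields `2 ^ n` accepted words of the same length, which is linear in `n`.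

As the accepted words of length at most `N` encode the elements of `S` below `k ^ N`, the two cases
yield polylogarithmic and power growth of `π_S`.
-/

open Filter Asymptotics

section Automata

variable {α σ ι : Type*} {M : DFA α σ} {q : σ}

/-- The cumulative growth function of the language `L`: the number of its words of length at most
`N`. It is meaningful over a finite alphabet only, since `Set.ncard` is `0` on infinite sets. -/
noncomputable def wordCount (L : Language α) (N : ℕ) : ℕ :=
  Set.ncard {w | w ∈ L ∧ w.length ≤ N}

/-- A state is useful if it is reachable from the start and an accepting state is reachable from it,
that is, if it occurs on some accepting run. -/
def IsUseful (M : DFA α σ) (q : σ) : Prop :=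
  (∃ u, M.eval u = q) ∧ ∃ v, v ∈ M.acceptsFrom q

/-- No useful state of `M` carries two distinct loops of the same length. This is the condition
separating polynomial from exponential growth of `M.accepts`. -/
def HasUniqueLoops (M : DFA α σ) : Prop :=
  ∀ ⦃q⦄, IsUseful M q → ∀ ⦃w₁ w₂⦄, w₁.length = w₂.length →
    M.evalFrom q w₁ = q → M.evalFrom q w₂ = q → w₁ = w₂

section LastVisit

variable [DecidableEq σ]

/-- The last time at which `M`, reading `w`, is in state `q`, or `0` if `q` is never visited. -/
def lastVisit (M : DFA α σ) (w : List α) (q : σ) : ℕ :=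
  Nat.findGreatest (fun i ↦ M.eval (w.take i) = q) w.length

/-- The data which determines an accepted word when loops are unique: for each state, the time of
its last visit and the letter read at that time, `none` marking the end of the word. -/
def visitCode (M : DFA α σ) (w : List α) (q : σ) : ℕ × Option α :=
  (lastVisit M w q, w[lastVisit M w q]?)

theorem lastVisit_le_length (M : DFA α σ) (w : List α) (q : σ) : lastVisit M w q ≤ w.length :=
  Nat.findGreatest_le _

theorem exists_lastVisit_append_eq_add (M : DFA α σ) (p s : List α) :
    ∃ j ≤ s.length, lastVisit M (p ++ s) (M.eval p) = p.length + j ∧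
      M.evalFrom (M.eval p) (s.take j) = M.eval p := by
  have hp : p.length ≤ (p ++ s).length := by simp
  have hvisit : M.eval ((p ++ s).take p.length) = M.eval p := by rw [List.take_left]
  obtain ⟨j, hj⟩ : ∃ j, lastVisit M (p ++ s) (M.eval p) = p.length + j :=
    Nat.exists_eq_add_of_le (Nat.le_findGreatest hp hvisit)
  have hle := lastVisit_le_length M (p ++ s) (M.eval p)
  have hlast : M.eval ((p ++ s).take (lastVisit M (p ++ s) (M.eval p))) = M.eval p :=
    Nat.findGreatest_spec (P := fun i ↦ M.eval ((p ++ s).take i) = M.eval p) hp hvisit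
  refine ⟨j, by simpa [hj] using hle, hj, ?_⟩
  rwa [hj, List.take_length_add_append, DFA.eval, DFA.evalFrom_of_append] at hlast

theorem HasUniqueLoops.head?_eq_of_visitCode_eq (hM : HasUniqueLoops M) {p s t : List α}
    (hs : p ++ s ∈ M.accepts) (h : visitCode M (p ++ s) = visitCode M (p ++ t)) :
    s.head? = t.head? := by
  obtain ⟨j, hjs, hlast_s, hloop_s⟩ := exists_lastVisit_append_eq_add M p s
  obtain ⟨i, hit, hlast_t, hloop_t⟩ := exists_lastVisit_append_eq_add M p t
  have hcode := congrFun h (M.eval p)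
  simp only [visitCode, hlast_s, hlast_t, Prod.mk.injEq, Nat.add_right_inj] at hcode
  obtain ⟨rfl, hletter⟩ := hcode
  replace hletter : s[j]? = t[j]? := by
    simpa [List.getElem?_append_right] using hletter
  have huseful : IsUseful M (M.eval p) := by
    refine ⟨⟨p, rfl⟩, s, ?_⟩
    rwa [DFA.mem_acceptsFrom, DFA.eval, ← DFA.evalFrom_of_append]
  have hloop : s.take j = t.take j := hM huseful (by simp [hjs, hit]) hloop_s hloop_t
  have htake : s.take (j + 1) = t.take (j + 1) := by
    rw [List.take_add_one, List.take_add_one, hloop, hletter]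
  simpa [List.head?_take] using congrArg List.head? htake

theorem HasUniqueLoops.eq_of_visitCode_append_eq (hM : HasUniqueLoops M) :
    ∀ {p s t : List α}, p ++ s ∈ M.accepts → visitCode M (p ++ s) = visitCode M (p ++ t) → s = t
  | _, [], _, hs, h =>
    (List.head?_eq_none_iff.1 (hM.head?_eq_of_visitCode_eq hs h).symm).symm
  | p, a :: s, t, hs, h => by
    obtain ⟨t, rfl⟩ : ∃ t', t = a :: t' :=
      List.head?_eq_some_iff.1 (hM.head?_eq_of_visitCode_eq hs h).symm
    rw [List.append_cons] at hs
    rw [List.append_cons, List.append_cons p a t] at h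
    rw [hM.eq_of_visitCode_append_eq hs h]

theorem HasUniqueLoops.injOn_visitCode (hM : HasUniqueLoops M) :
    Set.InjOn (visitCode M) M.accepts :=
  fun _ hs _ _ h ↦ hM.eq_of_visitCode_append_eq (p := []) hs h

end LastVisit

theorem HasUniqueLoops.wordCount_accepts_le [Fintype α] [Fintype σ] (hM : HasUniqueLoops M)
    (N : ℕ) :
    wordCount M.accepts N ≤ ((Fintype.card α + 1) * (N + 1)) ^ Fintype.card σ := by
  classical
  let codes : Finset (σ → ℕ × Option α) :=
    Fintype.piFinset fun _ ↦ Finset.range (N + 1) ×ˢ Finset.univ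
  have hcard : codes.card = ((Fintype.card α + 1) * (N + 1)) ^ Fintype.card σ := by
    simp [codes, mul_comm]
  rw [wordCount, ← hcard, ← Set.ncard_coe_finset]
  refine Set.ncard_le_ncard_of_injOn (visitCode M) ?_ (hM.injOn_visitCode.mono fun _ h ↦ h.1)
  rintro w ⟨-, hw⟩
  simpa [codes, visitCode, Nat.lt_succ_iff] using
    fun q ↦ (lastVisit_le_length M w q).trans hw

theorem evalFrom_flatMap_of_loops {f : ι → List α} (hf : ∀ i, M.evalFrom q (f i) = q)
    (l : List ι) : M.evalFrom q (l.flatMap f) = q := by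
  induction l with
  | nil => rfl
  | cons i l ih => rw [List.flatMap_cons, DFA.evalFrom_of_append, hf, ih]

theorem length_flatMap_of_length_eq {f : ι → List α} {L : ℕ} (hL : ∀ i, (f i).length = L)
    (l : List ι) : (l.flatMap f).length = l.length * L := by
  simp [List.length_flatMap, hL]

theorem injOn_flatMap_of_length_eq {f : ι → List α} (hf : Function.Injective f) {L : ℕ}
    (hL : ∀ i, (f i).length = L) (n : ℕ) : {l | l.length = n}.InjOn (List.flatMap f) := by
  intro l (hl : l.length = n) l' (hl' : l'.length = n) h
  have hflatten : (l.map f).flatten = (l'.map f).flatten := by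
    simpa only [List.flatMap_def] using h
  have hlengths : (l.map f).map List.length = (l'.map f).map List.length := by
    simp [Function.comp_def, hL, hl, hl']
  exact List.map_injective_iff.2 hf (List.eq_iff_flatten_eq.2 ⟨hflatten, hlengths⟩)

theorem card_pow_le_wordCount_accepts_of_loops [Finite α] [Fintype ι] {f : ι → List α}
    (hf : Function.Injective f) {L : ℕ} (hL : ∀ i, (f i).length = L)
    (hloop : ∀ i, M.evalFrom q (f i) = q) {u v : List α} (hu : M.eval u = q)
    (hv : v ∈ M.acceptsFrom q) (n : ℕ) :
    Fintype.card ι ^ n ≤ wordCount M.accepts (u.length + v.length + n * L) := by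
  let word : (Fin n → ι) → List α := fun b ↦ u ++ (List.ofFn b).flatMap f ++ v
  have hinj : Function.Injective word := fun b c h ↦
    List.ofFn_injective <| injOn_flatMap_of_length_eq hf hL n (by simp) (by simp)
      (List.append_cancel_left (List.append_cancel_right h))
  have hcard : (Set.range word).ncard = Fintype.card ι ^ n := by
    simp [Set.ncard_range_of_injective hinj]
  rw [← hcard]
  refine Set.ncard_le_ncard ?_ ((List.finite_length_le α _).subset fun _ h ↦ h.2)
  rintro _ ⟨b, rfl⟩
  constructor
  · rw [DFA.mem_accepts, DFA.eval, DFA.evalFrom_of_append, DFA.evalFrom_of_append, ← DFA.eval, hu,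
      evalFrom_flatMap_of_loops hloop]
    exact hv
  · simp only [word, List.length_append, length_flatMap_of_length_eq hL, List.length_ofFn]
    lia

theorem exists_two_pow_le_wordCount_accepts_of_not_hasUniqueLoops [Finite α]
    (hM : ¬ HasUniqueLoops M) :
    ∃ c L : ℕ, 0 < L ∧ ∀ n, 2 ^ n ≤ wordCount M.accepts (c + n * L) := by
  simp only [HasUniqueLoops, not_forall] at hM
  obtain ⟨q, ⟨⟨u, hu⟩, v, hv⟩, w₁, w₂, hlen, h₁, h₂, hne⟩ := hM
  have hpos : 0 < w₁.length := by
    rw [List.length_pos_iff]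
    rintro rfl
    exact hne (List.length_eq_zero_iff.1 hlen.symm).symm
  refine ⟨u.length + v.length, w₁.length, hpos, fun n ↦ ?_⟩
  rw [← Fintype.card_bool]
  refine card_pow_le_wordCount_accepts_of_loops (f := fun b ↦ cond b w₁ w₂) ?_ ?_ ?_ hu hv n
  · rintro (_ | _) (_ | _) h
    · rfl
    · exact absurd h.symm hne
    · exact absurd h hne
    · rfl
  · simp [hlen]
  · simp [h₁, h₂]

end Automata

section Expansions

variable {k : ℕ}

/-- The language of base-`k` expansions of the elements of `S`, least significant digit first. -/
def expansions (k : ℕ) (S : Set ℕ) : Language (Fin k) :=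
  {w | ∃ s ∈ S, w.map Fin.val = Nat.digits k s}

theorem exists_map_val_eq_digits (hk : 1 < k) (s : ℕ) :
    ∃ w : List (Fin k), w.map Fin.val = Nat.digits k s := by
  rw [← Set.mem_range, Set.range_list_map, Fin.range_val]
  exact fun d hd ↦ Nat.digits_lt_base hk hd

theorem monotone_piCount (S : Set ℕ) : Monotone (piCount S) := fun _ y hxy ↦
  Set.ncard_le_ncard (fun _ hn ↦ ⟨hn.1, hn.2.trans hxy⟩)
    ((Set.finite_Iic y).subset fun _ hn ↦ hn.2)

theorem wordCount_expansions (hk : 1 < k) (S : Set ℕ) (N : ℕ) :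
    wordCount (expansions k S) N = piCount S (k ^ N - 1) := by
  have hle (s : ℕ) : s ≤ k ^ N - 1 ↔ (Nat.digits k s).length ≤ N := by
    have := Nat.pow_pos (n := N) (Nat.zero_lt_of_lt hk)
    rw [Nat.digits_length_le_iff hk]
    lia
  have hvalue {w : List (Fin k)} {s : ℕ} (h : w.map Fin.val = Nat.digits k s) :
      Nat.ofDigits k (w.map Fin.val) = s := by rw [h, Nat.ofDigits_digits]
  refine Set.ncard_congr (fun w _ ↦ Nat.ofDigits k (w.map Fin.val)) ?_ ?_ ?_
  · rintro w ⟨⟨s, hs, hws⟩, hw⟩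
    rw [hvalue hws]
    exact ⟨hs, (hle s).2 (by simpa [← hws] using hw)⟩
  · rintro w w' ⟨⟨s, -, hws⟩, -⟩ ⟨⟨s', -, hws'⟩, -⟩ h
    rw [hvalue hws, hvalue hws'] at h
    exact List.map_injective_iff.2 Fin.val_injective (by rw [hws, hws', h])
  · rintro s ⟨hs, hsN⟩
    obtain ⟨w, hw⟩ := exists_map_val_eq_digits hk s
    exact ⟨w, ⟨⟨s, hs, hw⟩, by simpa [← hw] using (hle s).1 hsN⟩, hvalue hw⟩

end Expansions

section Growth

variable {S : Set ℕ}

/-- `f x = Ω(x ^ a)` for some real `a > 0`. -/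
def HasPowerGrowth (f : ℕ → ℝ) : Prop :=
  ∃ a : ℝ, 0 < a ∧ ∃ c : ℝ, 0 < c ∧ ∃ x0 : ℕ, ∀ x : ℕ, x0 ≤ x → c * (x : ℝ) ^ a ≤ f x

theorem HasPowerGrowth.exists_rpow_isBigO {f : ℕ → ℝ} (hf : HasPowerGrowth f) :
    ∃ a : ℝ, 0 < a ∧ (fun x : ℕ ↦ (x : ℝ) ^ a) =O[atTop] f := by
  obtain ⟨a, ha, c, hc, x₀, h⟩ := hf
  refine ⟨a, ha, .of_bound c⁻¹ ?_⟩
  filter_upwards [eventually_ge_atTop x₀] with x hx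
  rw [Real.norm_of_nonneg (by positivity), le_inv_mul_iff₀ hc]
  exact (h x hx).trans (le_abs_self _)

theorem IsSparse.exists_isBigO_log_pow (hS : IsSparse S) :
    ∃ d : ℕ, (fun x ↦ (piCount S x : ℝ)) =O[atTop] fun x ↦ Real.log x ^ d := by
  obtain ⟨d, C, -, x₀, h⟩ := hS
  refine ⟨d, .of_bound C ?_⟩
  filter_upwards [eventually_ge_atTop x₀] with x hx
  rw [Real.norm_natCast, Real.norm_of_nonneg (pow_nonneg (Real.log_natCast_nonneg x) d)]
  exact h x hx

theorem HasPowerGrowth.not_isSparse (hS : HasPowerGrowth fun x ↦ piCount S x) : ¬ IsSparse S := by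
  intro hsparse
  obtain ⟨a, ha, hlower⟩ := hS.exists_rpow_isBigO
  obtain ⟨d, hupper⟩ := hsparse.exists_isBigO_log_pow
  have hlog : (fun x : ℕ ↦ Real.log x ^ d) =o[atTop] fun x : ℕ ↦ (x : ℝ) ^ a := by
    simpa [Function.comp_def] using
      (isLittleO_log_rpow_rpow_atTop d ha).comp_tendsto (tendsto_natCast_atTop_atTop (R := ℝ))
  refine isLittleO_irrefl ?_ ((hlower.trans hupper).trans_isLittleO hlog)
  refine ((eventually_gt_atTop 0).mono fun x hx ↦ ?_).frequently
  positivity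

theorem hasPowerGrowth_of_pow_le {f : ℕ → ℝ} (hf : Monotone f) {r : ℝ} (hr : 1 < r) {b B : ℕ}
    (hb : 0 < b) (hB : 1 < B) (h : ∀ n, r ^ n ≤ f (b * B ^ n)) : HasPowerGrowth f := by
  have hB' : (1 : ℝ) < B := mod_cast hB
  have hr0 : 0 < r := one_pos.trans hr
  let a := Real.logb B r
  have ha : 0 < a := Real.logb_pos hB' hr
  have hBa : (B : ℝ) ^ a = r := Real.rpow_logb (one_pos.trans hB') hB'.ne' hr0
  refine ⟨a, ha, ((b : ℝ) ^ a * r)⁻¹, by positivity, b, fun x hx ↦ ?_⟩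
  let n := Nat.log B (x / b)
  have hlower : b * B ^ n ≤ x := by
    rw [mul_comm, ← Nat.le_div_iff_mul_le hb]
    exact Nat.pow_log_le_self B (Nat.div_pos hx hb).ne'
  have hupper : x < b * B ^ (n + 1) := by
    rw [mul_comm, ← Nat.div_lt_iff_lt_mul hb]
    exact Nat.lt_pow_succ_log_self hB _
  rw [inv_mul_le_iff₀ (by positivity)]
  calc (x : ℝ) ^ a ≤ ((b * B ^ (n + 1) : ℕ) : ℝ) ^ a := by gcongr
    _ = (b : ℝ) ^ a * r * r ^ n := by
      push_cast
      rw [Real.mul_rpow (by positivity) (by positivity), ← Real.rpow_pow_comm (by positivity),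
        hBa, pow_succ']
      ring
    _ ≤ (b : ℝ) ^ a * r * f x := by
      gcongr
      exact (h n).trans (hf hlower)

theorem isSparse_of_piCount_le_natLog_pow {A b d : ℕ}
    (h : ∀ x, piCount S x ≤ (A * (Nat.log b x + 2)) ^ d) : IsSparse S := by
  let D : ℝ := (Real.log b)⁻¹ + 2
  refine ⟨d, (A * D) ^ d + 1, by positivity, 3, fun x hx ↦ ?_⟩
  have hlog_ge_one : 1 ≤ Real.log x := by
    have hx' : (3 : ℝ) ≤ x := mod_cast hx
    rw [Real.le_log_iff_exp_le (by positivity)]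
    exact Real.exp_one_lt_three.le.trans hx'
  have hnatLog : (Nat.log b x : ℝ) + 2 ≤ D * Real.log x :=
    calc (Nat.log b x : ℝ) + 2 ≤ Real.logb b x + 2 * Real.log x := by
          gcongr
          · exact Real.natLog_le_logb x b
          · linarith
      _ = D * Real.log x := by rw [Real.logb]; ring
  calc (piCount S x : ℝ) ≤ (A * (Nat.log b x + 2)) ^ d := mod_cast h x
    _ ≤ (A * (D * Real.log x)) ^ d := by gcongr
    _ = (A * D) ^ d * Real.log x ^ d := by rw [← mul_assoc, mul_pow]
    _ ≤ ((A * D) ^ d + 1) * Real.log x ^ d := by gcongr; linarith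

theorem isSparse_of_wordCount_expansions_le {k A d : ℕ} (hk : 1 < k)
    (h : ∀ N, wordCount (expansions k S) N ≤ (A * (N + 1)) ^ d) : IsSparse S := by
  refine isSparse_of_piCount_le_natLog_pow (b := k) fun x ↦ le_trans ?_ (h (Nat.log k x + 1))
  rw [wordCount_expansions hk]
  exact monotone_piCount S (Nat.le_sub_one_of_lt (Nat.lt_pow_succ_log_self hk x))

theorem hasPowerGrowth_of_two_pow_le_wordCount_expansions {k c L : ℕ} (hk : 1 < k) (hL : 0 < L)
    (h : ∀ n, 2 ^ n ≤ wordCount (expansions k S) (c + n * L)) :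
    HasPowerGrowth fun x ↦ piCount S x := by
  refine hasPowerGrowth_of_pow_le (Nat.mono_cast.comp (monotone_piCount S)) one_lt_two
    (b := k ^ c) (B := k ^ L) (by positivity) (Nat.one_lt_pow hL.ne' hk) fun n ↦ ?_
  have hexp : k ^ c * (k ^ L) ^ n = k ^ (c + n * L) := by ring
  rw [hexp]
  have hcount := h n
  rw [wordCount_expansions hk] at hcount
  exact_mod_cast hcount.trans (monotone_piCount S (Nat.sub_le _ 1))

end Growth

/-- A `k`-automatic set `S` is non-sparse if and only if `π_S(x) = Ω(x^α)` for some
real `α > 0`. -/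
theorem automatic_nonsparse_iff_power_growth
    (k : ℕ) (hk : 2 ≤ k) (S : Set ℕ) (hS : IsKAutomatic k S) :
    ¬ IsSparse S ↔
      ∃ a : ℝ, 0 < a ∧ ∃ c : ℝ, 0 < c ∧ ∃ x0 : ℕ, ∀ x : ℕ, x0 ≤ x →
        c * (x : ℝ) ^ a ≤ (piCount S x : ℝ) := by
  refine ⟨fun hnonsparse ↦ ?_, HasPowerGrowth.not_isSparse⟩
  obtain ⟨m, M, hM⟩ := hS
  have haccepts : M.accepts = expansions k S := Set.ext hM
  have hloops : ¬ HasUniqueLoops M := fun hloops ↦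
    hnonsparse <| isSparse_of_wordCount_expansions_le hk fun N ↦
      haccepts ▸ hloops.wordCount_accepts_le N
  obtain ⟨c, L, hL, hgrowth⟩ :=
    exists_two_pow_le_wordCount_accepts_of_not_hasUniqueLoops hloops
  rw [haccepts] at hgrowth
  exact hasPowerGrowth_of_two_pow_le_wordCount_expansions hk hL hgrowth
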